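/- arXiv:2512.03160 — 6 statements merged into one kernel-verified Lean document; each statement's English description precedes it below -/
import Mathlib

section
/- Let A ∈ ℝ^{n×n}. If there exist a real matrix P ∈ ℝ^{m×n} of full column rank (rank(P) = n, m ≥ n) and a real matrix Q ∈ ℝ^{m×m} such that P·A = Q·P and μ_∞(Q) < 0, then every complex eigenvalue λ of A (i.e., of the complexification of A) satisfies Re(λ) < 0; equivalently, the continuous-time linear system ẋ = A x is asymptotically stable. -/
open Matrix Finset

/-- Logarithmic norm induced by the vector ∞-norm: `μ_∞(Q) = max_i (Q i i + ∑_{j≠i} |Q i j|)`. -/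
noncomputable def muInf {m : ℕ} (Q : Matrix (Fin m) (Fin m) ℝ) : ℝ :=
  ⨆ i, (Q i i + ∑ j ∈ Finset.univ.filter (fun j => j ≠ i), |Q i j|)

/-- Induced matrix ∞-norm: `‖Q‖_∞ = max_i ∑_j |Q i j|`. -/
noncomputable def normInf {m p : ℕ} (Q : Matrix (Fin m) (Fin p) ℝ) : ℝ :=
  ⨆ i, ∑ j, |Q i j|

/-- Vector ∞-norm: `‖v‖_∞ = max_i |v i|`. -/
noncomputable def vecNormInf {m : ℕ} (v : Fin m → ℝ) : ℝ := ⨆ i, |v i|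

/-- Metzlerization `Q^m`: keep the diagonal, take absolute values off-diagonal. -/
def metzlerize {m : ℕ} (Q : Matrix (Fin m) (Fin m) ℝ) : Matrix (Fin m) (Fin m) ℝ :=
  Matrix.of fun i j => if i = j then Q i j else |Q i j|

/-- Entrywise absolute value `|M|`. -/
def matAbs {p q : ℕ} (M : Matrix (Fin p) (Fin q) ℝ) : Matrix (Fin p) (Fin q) ℝ :=
  Matrix.of fun i j => |M i j|

/-- Entrywise positive part `M⁺`. -/
def matPos {p q : ℕ} (M : Matrix (Fin p) (Fin q) ℝ) : Matrix (Fin p) (Fin q) ℝ :=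
  Matrix.of fun i j => max (M i j) 0

/-- Entrywise negative part `M⁻ := M⁺ − M`. -/
def matNeg {p q : ℕ} (M : Matrix (Fin p) (Fin q) ℝ) : Matrix (Fin p) (Fin q) ℝ :=
  matPos M - M

/-- `Q↑ := Q^d + (Q^{nd})⁺` (diagonal plus positive part of the off-diagonal). -/
def matUp {m : ℕ} (Q : Matrix (Fin m) (Fin m) ℝ) : Matrix (Fin m) (Fin m) ℝ :=
  Matrix.of fun i j => if i = j then Q i j else max (Q i j) 0

/-- `Q↓ := (Q^{nd})⁻` (negative part of the off-diagonal). -/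
def matDown {m : ℕ} (Q : Matrix (Fin m) (Fin m) ℝ) : Matrix (Fin m) (Fin m) ℝ :=
  Matrix.of fun i j => if i = j then 0 else max (Q i j) 0 - Q i j

/-!
If `B * P = 1` and `P * A = Q * P`, then `P * (z - A) = (z - Q) * P`, so inverting `z - Q` makes
`B * (z - Q)⁻¹ * P` a left inverse of `z - A`: the spectrum of `A` is contained in that of `Q`.
A left inverse of a real `P` of full column rank is still one over `ℂ`. Finally, every Gershgorin
disc of `Q` is centred on the real axis, and `μ_∞(Q)` is the largest real part of a point of these
discs, so it bounds the real part of every eigenvalue of `Q`.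
-/

section Intertwining

variable {m n : Type*} [Fintype m] [Fintype n] [DecidableEq n]

theorem exists_left_inverse_of_rank_eq_card {K : Type*} [Field K] {P : Matrix m n K}
    (hP : P.rank = Fintype.card n) : ∃ B : Matrix n m K, B * P = 1 := by
  classical
  have hcols : LinearIndependent K P.col := by
    rw [linearIndependent_iff_card_eq_finrank_span, Set.finrank, ← rank_eq_finrank_span_cols, hP]
  have hker : LinearMap.ker (toLin' P) = ⊥ :=
    LinearMap.ker_eq_bot.mpr (mulVec_injective_iff.mpr hcols)
  obtain ⟨g, hg⟩ := (toLin' P).exists_leftInverse_of_injective hker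
  refine ⟨LinearMap.toMatrix' g, ?_⟩
  rw [← LinearMap.toMatrix'_toLin' P, ← LinearMap.toMatrix'_comp, hg, LinearMap.toMatrix'_id]

theorem spectrum_subset_of_mul_eq_mul [DecidableEq m] {R : Type*} [CommRing R]
    {A : Matrix n n R} {P : Matrix m n R} {Q : Matrix m m R} {B : Matrix n m R}
    (hBP : B * P = 1) (hPA : P * A = Q * P) : spectrum R A ⊆ spectrum R Q := by
  intro z
  contrapose
  simp only [spectrum.notMem_iff]
  intro hQ
  obtain ⟨C, hC⟩ := hQ.exists_left_inv
  have hcomm : P * (algebraMap R _ z - A) = (algebraMap R _ z - Q) * P := by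
    simp only [Algebra.algebraMap_eq_smul_one, Matrix.mul_sub, Matrix.sub_mul, Matrix.mul_smul,
      Matrix.smul_mul, Matrix.mul_one, Matrix.one_mul, hPA]
  have hinv : B * C * P * (algebraMap R _ z - A) = 1 := by
    calc B * C * P * (algebraMap R _ z - A)
        = B * (C * (algebraMap R _ z - Q)) * P := by
          rw [Matrix.mul_assoc _ P, hcomm]
          simp only [Matrix.mul_assoc]
      _ = 1 := by rw [hC, Matrix.mul_one, hBP]
  exact IsUnit.of_mul_eq_one_right _ hinv

theorem spectrum_map_subset_of_rank_eq_card [DecidableEq m] {K L : Type*} [Field K] [CommRing L]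
    [Algebra K L] {A : Matrix n n K} {P : Matrix m n K} {Q : Matrix m m K}
    (hP : P.rank = Fintype.card n) (hPA : P * A = Q * P) :
    spectrum L (A.map (algebraMap K L)) ⊆ spectrum L (Q.map (algebraMap K L)) := by
  obtain ⟨B, hBP⟩ := exists_left_inverse_of_rank_eq_card hP
  have hBP' : B.map (algebraMap K L) * P.map (algebraMap K L) = 1 := by
    rw [← Matrix.map_mul, hBP, Matrix.map_one _ (map_zero _) (map_one _)]
  refine spectrum_subset_of_mul_eq_mul hBP' ?_
  rw [← Matrix.map_mul, hPA, Matrix.map_mul]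

end Intertwining

theorem exists_re_le_re_diag_add_sum_norm {𝕜 n : Type*} [RCLike 𝕜] [Fintype n] [DecidableEq n]
    {A : Matrix n n 𝕜} {z : 𝕜} (hz : z ∈ spectrum 𝕜 A) :
    ∃ k, RCLike.re z ≤ RCLike.re (A k k) + ∑ j ∈ univ.erase k, ‖A k j‖ := by
  rw [← spectrum_toLin', ← Module.End.hasEigenvalue_iff_mem_spectrum] at hz
  obtain ⟨k, hk⟩ := eigenvalue_mem_ball hz
  refine ⟨k, sub_le_iff_le_add'.mp ?_⟩
  calc RCLike.re z - RCLike.re (A k k) = RCLike.re (z - A k k) := (map_sub _ _ _).symm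
    _ ≤ ‖z - A k k‖ := RCLike.re_le_norm _
    _ ≤ ∑ j ∈ univ.erase k, ‖A k j‖ := mem_closedBall_iff_norm.mp hk

theorem diag_add_sum_abs_le_muInf {m : ℕ} (Q : Matrix (Fin m) (Fin m) ℝ) (k : Fin m) :
    Q k k + ∑ j ∈ univ.erase k, |Q k j| ≤ muInf Q := by
  rw [← filter_ne']
  exact le_ciSup (f := fun i => Q i i + ∑ j ∈ univ.filter (fun j => j ≠ i), |Q i j|)
    (Set.finite_range _).bddAbove k

theorem re_le_muInf_of_mem_spectrum {m : ℕ} {Q : Matrix (Fin m) (Fin m) ℝ} {z : ℂ}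
    (hz : z ∈ spectrum ℂ (Q.map (algebraMap ℝ ℂ))) : z.re ≤ muInf Q := by
  obtain ⟨k, hk⟩ := exists_re_le_re_diag_add_sum_norm hz
  refine le_trans ?_ (diag_add_sum_abs_le_muInf Q k)
  simpa only [Matrix.map_apply, Complex.coe_algebraMap, Complex.norm_real, Real.norm_eq_abs,
    RCLike.re_eq_complex_re, Complex.ofReal_re] using hk

theorem hurwitz_of_polyhedral_lyapunov_general {ι : Type*} [Fintype ι] [DecidableEq ι] {m : ℕ}
    {A : Matrix ι ι ℝ} {P : Matrix (Fin m) ι ℝ} {Q : Matrix (Fin m) (Fin m) ℝ}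
    (hrank : P.rank = Fintype.card ι) (hPA : P * A = Q * P) :
    ∀ z ∈ spectrum ℂ (A.map (algebraMap ℝ ℂ)), z.re ≤ muInf Q :=
  fun _ hz => re_le_muInf_of_mem_spectrum (spectrum_map_subset_of_rank_eq_card hrank hPA hz)

/-- existence of full-column-rank `P` and `Q` with `P A = Q P`, `μ_∞(Q) < 0`
implies Hurwitz stability of `A`. -/
theorem hurwitz_of_polyhedral_lyapunov {n m : ℕ} (hnm : n ≤ m)
    (A : Matrix (Fin n) (Fin n) ℝ) (P : Matrix (Fin m) (Fin n) ℝ)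
    (Q : Matrix (Fin m) (Fin m) ℝ) (hrank : P.rank = n)
    (hPA : P * A = Q * P) (hQ : muInf Q < 0) :
    ∀ lam ∈ spectrum ℂ (A.map (algebraMap ℝ ℂ)), lam.re < 0 :=
  fun lam hlam => (hurwitz_of_polyhedral_lyapunov_general
    (hrank.trans (Fintype.card_fin n).symm) hPA lam hlam).trans_lt hQ
end

section
/- Let A ∈ ℝ^{n×n} be such that every complex eigenvalue λ of A satisfies Re(λ) < 0 (A is Hurwitz stable). Then there exist an integer m ≥ n, a real matrix P ∈ ℝ^{m×n} of full column rank (rank(P) = n), and a real matrix Q ∈ ℝ^{m×m} such that P·A = Q·P and μ_∞(Q) < 0. -/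
open Matrix Finset

/-!
For small `h > 0` the Euler step `1 + h • A` has spectral radius less than `1`, the spectrum of `A`
being a compact subset of the open left half plane. So `1 + h • A = s • C` with `s < 1` and
`‖C ^ (M + 1)‖_∞ ≤ 1` for some `M`. The polyhedral norm `x ↦ max_{k ≤ M} ‖C ^ k x‖_∞` does not
increase under `C`. It is the `∞`-norm of `P x`, where `P` stacks `1, C, …, C ^ M`, and in these
lifted coordinates `C` acts by a block companion matrix `T` with `‖T‖_∞ ≤ 1`. Undoing the Euler
step gives `Q = h⁻¹ • (s • T - 1)`, with `μ_∞(Q) ≤ h⁻¹ * (s * ‖T‖_∞ - 1) < 0`.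
-/

section SpectralRadius

open Filter
open scoped NNReal ENNReal

theorem exists_pos_forall_norm_one_add_mul_lt_one {S : Set ℂ} (hS : IsCompact S)
    (hre : ∀ z ∈ S, z.re < 0) : ∃ h : ℝ, 0 < h ∧ ∀ z ∈ S, ‖1 + h * z‖ < 1 := by
  have hsq_pos : ∀ z ∈ S, 0 < Complex.normSq z := fun z hz =>
    Complex.normSq_pos.2 fun h0 => by simpa [h0] using hre z hz
  have hcont : ContinuousOn (fun z : ℂ => -z.re / Complex.normSq z) S :=
    Complex.continuous_re.neg.continuousOn.div Complex.continuous_normSq.continuousOn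
      fun z hz => (hsq_pos z hz).ne'
  obtain ⟨h, hpos, hle⟩ := hS.exists_forall_le' hcont
    fun z hz => div_pos (neg_pos.2 (hre z hz)) (hsq_pos z hz)
  refine ⟨h, hpos, fun z hz => (sq_lt_one_iff₀ (norm_nonneg _)).1 ?_⟩
  have hstep : h * Complex.normSq z ≤ -z.re := (le_div_iff₀ (hsq_pos z hz)).1 (hle z hz)
  have hexpand : ‖1 + h * z‖ ^ 2 = 1 + h * (2 * z.re + h * Complex.normSq z) := by
    rw [← Complex.normSq_eq_norm_sq, Complex.normSq_apply, Complex.normSq_apply]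
    simp only [Complex.add_re, Complex.one_re, Complex.re_ofReal_mul, Complex.add_im,
      Complex.one_im, Complex.im_ofReal_mul]
    ring
  have hneg : 2 * z.re + h * Complex.normSq z < 0 := by linarith [hre z hz]
  linarith [mul_neg_of_pos_of_neg hpos hneg]

variable {R : Type*} [NormedRing R] [NormedAlgebra ℂ R] [CompleteSpace R]

theorem exists_pos_spectralRadius_one_add_smul_lt_one [Nontrivial R] {a : R}
    (ha : ∀ z ∈ spectrum ℂ a, z.re < 0) :
    ∃ h : ℝ, 0 < h ∧ spectralRadius ℂ (1 + (h : ℂ) • a) < 1 := by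
  obtain ⟨h, hpos, hlt⟩ := exists_pos_forall_norm_one_add_mul_lt_one (spectrum.isCompact a) ha
  refine ⟨h, hpos, spectrum.spectralRadius_lt_of_forall_lt (r := 1) _ fun z hz => ?_⟩
  rw [← map_one (algebraMap ℂ R), ← spectrum.singleton_add_eq,
    spectrum.smul_eq_smul _ _ (spectrum.nonempty a)] at hz
  obtain ⟨_, rfl, _, ⟨w, hw, rfl⟩, rfl⟩ := hz
  exact hlt w hw

theorem eventually_nnnorm_pow_lt_pow_of_spectralRadius_lt {a : R} {r : ℝ≥0}
    (har : spectralRadius ℂ a < r) : ∀ᶠ k : ℕ in atTop, ‖a ^ k‖₊ < r ^ k := by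
  have hgelfand := spectrum.pow_nnnorm_pow_one_div_tendsto_nhds_spectralRadius a
  filter_upwards [hgelfand.eventually_lt_const har, eventually_gt_atTop 0] with k hk hk0
  rw [one_div, ENNReal.rpow_inv_lt_iff (Nat.cast_pos.2 hk0)] at hk
  exact_mod_cast hk

theorem exists_nnnorm_pow_le_pow_of_spectralRadius_lt_one {a : R}
    (ha : spectralRadius ℂ a < 1) :
    ∃ s : ℝ≥0, 0 < s ∧ s < 1 ∧ ∃ k : ℕ, ‖a ^ (k + 1)‖₊ ≤ s ^ (k + 1) := by
  obtain ⟨s, has, hs⟩ := ENNReal.lt_iff_exists_nnreal_btwn.1 ha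
  have hs_pos : 0 < s := ENNReal.coe_pos.1 (bot_le.trans_lt has)
  obtain ⟨k, hk⟩ := ((tendsto_add_atTop_nat 1).eventually
    (eventually_nnnorm_pow_lt_pow_of_spectralRadius_lt has)).exists
  exact ⟨s, hs_pos, by exact_mod_cast hs, k, hk.le⟩

end SpectralRadius

section OperatorNorm

open scoped NNReal Matrix.Norms.Operator

variable {ι κ α β : Type*} [Fintype ι] [Fintype κ]
  [SeminormedAddCommGroup α] [SeminormedAddCommGroup β]

theorem linfty_opNNNorm_le_iff {A : Matrix ι κ α} {r : ℝ≥0} :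
    ‖A‖₊ ≤ r ↔ ∀ i, ∑ j, ‖A i j‖₊ ≤ r := by
  simp [linfty_opNNNorm_def]

theorem sum_norm_le_linfty_opNorm (A : Matrix ι κ α) (i : ι) : ∑ j, ‖A i j‖ ≤ ‖A‖ := by
  simpa using NNReal.coe_le_coe.2 (linfty_opNNNorm_le_iff.1 (le_refl ‖A‖₊) i)

theorem linfty_opNNNorm_map_eq (A : Matrix ι κ α) {f : α → β} (hf : ∀ a, ‖f a‖₊ = ‖a‖₊) :
    ‖A.map f‖₊ = ‖A‖₊ := by
  simp [linfty_opNNNorm_def, hf]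

theorem linfty_opNNNorm_submatrix_le {ι' κ' : Type*} [Fintype ι'] [Fintype κ']
    (A : Matrix ι κ α) (f : ι' → ι) (e : κ' ≃ κ) : ‖A.submatrix f e‖₊ ≤ ‖A‖₊ :=
  linfty_opNNNorm_le_iff.2 fun i => by
    simpa [e.sum_comp fun j => ‖A (f i) j‖₊] using linfty_opNNNorm_le_iff.1 le_rfl (f i)

theorem muInf_smul_sub_one_le {m : ℕ} [NeZero m] {c : ℝ} (hc : 0 ≤ c)
    (T : Matrix (Fin m) (Fin m) ℝ) : muInf (c • (T - 1)) ≤ c * (‖T‖ - 1) := by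
  refine ciSup_le fun i => ?_
  have hoff : ∑ j with j ≠ i, |(c • (T - 1)) i j| = c * ∑ j with j ≠ i, |T i j| := by
    rw [mul_sum]
    refine sum_congr rfl fun j hj => ?_
    simp [Matrix.one_apply_ne' (mem_filter.1 hj).2, abs_mul, abs_of_nonneg hc]
  have hrow : |T i i| + ∑ j with j ≠ i, |T i j| ≤ ‖T‖ := by
    rw [filter_ne', add_sum_erase _ (fun j => |T i j|) (mem_univ i)]
    exact sum_norm_le_linfty_opNorm T i
  calc (c • (T - 1)) i i + ∑ j with j ≠ i, |(c • (T - 1)) i j|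
      = c * (T i i + ∑ j with j ≠ i, |T i j| - 1) := by
        rw [hoff, Matrix.smul_apply, Matrix.sub_apply, Matrix.one_apply_eq, smul_eq_mul]
        ring
    _ ≤ c * (‖T‖ - 1) := by
        gcongr
        linarith [le_abs_self (T i i)]

theorem muInf_smul_sub_one_neg {m : ℕ} [NeZero m] {c : ℝ} (hc : 0 < c)
    {T : Matrix (Fin m) (Fin m) ℝ} (hT : ‖T‖ < 1) : muInf (c • (T - 1)) < 0 :=
  (muInf_smul_sub_one_le hc.le T).trans_lt (mul_neg_of_pos_of_neg hc (sub_neg.2 hT))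

end OperatorNorm

section Lift

variable {ι K : Type*} [Fintype ι] [DecidableEq ι]

/-- The block column with blocks `1, C, …, C ^ M`, the index `(i, k)` being row `i` of block `k`.
The `∞`-norm of `stackedPowers C M *ᵥ x` is the polyhedral norm `max_{k ≤ M} ‖C ^ k x‖_∞`. -/
def stackedPowers [Semiring K] (C : Matrix ι ι K) (M : ℕ) : Matrix (ι × Fin (M + 1)) ι K :=
  Matrix.of fun p => (C ^ (p.2 : ℕ)) p.1

/-- The block companion matrix of the polynomial `X ^ (M + 1) - C ^ (M + 1)`, through which `C` acts
on `stackedPowers C M`. Addition in `Fin (M + 1)` is cyclic, so the block `C ^ (M + 1)` of the last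
block row sits in block column `0`. -/
def blockCompanion [Semiring K] (C : Matrix ι ι K) (M : ℕ) :
    Matrix (ι × Fin (M + 1)) (ι × Fin (M + 1)) K :=
  Matrix.of fun p q =>
    if q.2 = p.2 + 1 then (if p.2 = Fin.last M then C ^ (M + 1) else 1) p.1 q.1 else 0

theorem stackedPowers_mul_eq_blockCompanion_mul [Semiring K] (C : Matrix ι ι K) (M : ℕ) :
    stackedPowers C M * C = blockCompanion C M * stackedPowers C M := by
  ext ⟨i, k⟩ j
  have hblock : C ^ (k : ℕ) * C =
      (if k = Fin.last M then C ^ (M + 1) else 1) * C ^ ((k + 1 : Fin (M + 1)) : ℕ) := by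
    rw [← pow_succ, Fin.val_add_one]
    split_ifs with hk <;> simp [hk]
  calc (stackedPowers C M * C) (i, k) j = (C ^ (k : ℕ) * C) i j := rfl
    _ = (blockCompanion C M * stackedPowers C M) (i, k) j := by
      rw [hblock]
      simp [Matrix.mul_apply, blockCompanion, stackedPowers, Fintype.sum_prod_type]

theorem rank_stackedPowers [CommSemiring K] [StrongRankCondition K] (C : Matrix ι ι K) (M : ℕ) :
    (stackedPowers C M).rank = Fintype.card ι := by
  refine le_antisymm (Matrix.rank_le_card_width _) ?_
  have htop : (stackedPowers C M).submatrix (fun i => (i, 0)) id = 1 := by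
    ext i j
    simp [stackedPowers]
  calc Fintype.card ι = ((stackedPowers C M).submatrix (fun i => (i, 0)) id).rank := by
        rw [htop, Matrix.rank_one]
    _ ≤ (stackedPowers C M).rank := Matrix.rank_submatrix_le _ _ _

open scoped Matrix.Norms.Operator

theorem linfty_opNNNorm_blockCompanion_le_one [SeminormedRing K] [NormOneClass K]
    {C : Matrix ι ι K} {M : ℕ} (hC : ‖C ^ (M + 1)‖₊ ≤ 1) : ‖blockCompanion C M‖₊ ≤ 1 := by
  refine linfty_opNNNorm_le_iff.2 fun ⟨i, k⟩ => ?_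
  have : Nonempty ι := ⟨i⟩
  have hblock : ‖if k = Fin.last M then C ^ (M + 1) else 1‖₊ ≤ 1 := by
    split_ifs
    exacts [hC, nnnorm_one.le]
  simpa [blockCompanion, Fintype.sum_prod_type, apply_ite nnnorm]
    using linfty_opNNNorm_le_iff.1 hblock i

theorem exists_rank_eq_mul_eq_mul_linfty_opNorm_le_one [SeminormedCommRing K] [NormOneClass K]
    {C : Matrix ι ι K} {M : ℕ} (hC : ‖C ^ (M + 1)‖ ≤ 1) :
    ∃ (m : ℕ) (P : Matrix (Fin m) ι K) (T : Matrix (Fin m) (Fin m) K),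
      P.rank = Fintype.card ι ∧ P * C = T * P ∧ ‖T‖ ≤ 1 := by
  have : Nontrivial K := NormOneClass.nontrivial
  let e := (Fintype.equivFin (ι × Fin (M + 1))).symm
  refine ⟨_, (stackedPowers C M).submatrix e id, (blockCompanion C M).submatrix e e, ?_, ?_, ?_⟩
  · exact (Matrix.rank_submatrix _ e (Equiv.refl ι)).trans (rank_stackedPowers C M)
  · rw [Matrix.submatrix_mul_equiv, ← stackedPowers_mul_eq_blockCompanion_mul]
    rfl
  · exact (linfty_opNNNorm_submatrix_le _ e e).trans (linfty_opNNNorm_blockCompanion_le_one hC)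

end Lift

section Hurwitz

open scoped Matrix.Norms.Operator

theorem exists_eq_smul_smul_sub_one_of_hurwitz {ι : Type*} [Fintype ι] [DecidableEq ι]
    [Nonempty ι] {A : Matrix ι ι ℝ}
    (hA : ∀ lam ∈ spectrum ℂ (A.map (algebraMap ℝ ℂ)), lam.re < 0) :
    ∃ (c s : ℝ) (C : Matrix ι ι ℝ) (M : ℕ),
      0 < c ∧ 0 ≤ s ∧ s < 1 ∧ A = c • (s • C - 1) ∧ ‖C ^ (M + 1)‖ ≤ 1 := by
  obtain ⟨h, hpos, hrad⟩ := exists_pos_spectralRadius_one_add_smul_lt_one hA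
  obtain ⟨s, hs_pos, hs, M, hM⟩ := exists_nnnorm_pow_le_pow_of_spectralRadius_lt_one hrad
  have hs_ne : (s : ℝ) ≠ 0 := by exact_mod_cast hs_pos.ne'
  have hpow : (1 + (h : ℂ) • A.map (algebraMap ℝ ℂ)) ^ (M + 1) =
      ((1 + h • A) ^ (M + 1)).map (algebraMap ℝ ℂ) := by
    have hbase : 1 + (h : ℂ) • A.map (algebraMap ℝ ℂ) =
        (algebraMap ℝ ℂ).mapMatrix (1 + h • A) := by
      ext i j
      simp [Matrix.one_apply, apply_ite]
    rw [hbase, ← map_pow, RingHom.mapMatrix_apply]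
  rw [hpow, linfty_opNNNorm_map_eq _ fun x => by simp] at hM
  refine ⟨h⁻¹, s, (s : ℝ)⁻¹ • (1 + h • A), M, inv_pos.2 hpos, s.2, by exact_mod_cast hs, ?_, ?_⟩
  · rw [smul_inv_smul₀ hs_ne, add_sub_cancel_left, inv_smul_smul₀ hpos.ne']
  · rw [smul_pow, norm_smul, norm_pow, norm_inv, NNReal.norm_eq, inv_pow,
      inv_mul_le_one₀ (by positivity)]
    exact_mod_cast hM

end Hurwitz

/-- every Hurwitz stable real matrix admits a full-column-rank `P` (possibly
lifted, `m ≥ n`) and `Q` with `P A = Q P` and `μ_∞(Q) < 0`. -/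
theorem polyhedral_lyapunov_of_hurwitz {n : ℕ} (A : Matrix (Fin n) (Fin n) ℝ)
    (hA : ∀ lam ∈ spectrum ℂ (A.map (algebraMap ℝ ℂ)), lam.re < 0) :
    ∃ (m : ℕ) (P : Matrix (Fin m) (Fin n) ℝ) (Q : Matrix (Fin m) (Fin m) ℝ),
      n ≤ m ∧ P.rank = n ∧ P * A = Q * P ∧ muInf Q < 0 := by
  obtain rfl | hn := Nat.eq_zero_or_pos n
  -- `muInf` of the empty matrix is the junk value `0`, so `m = 1` here.
  · exact ⟨1, 0, -1, zero_le_one, by simp, Subsingleton.elim _ _, by simp [muInf, filter_ne']⟩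
  have : NeZero n := ⟨hn.ne'⟩
  obtain ⟨c, s, C, M, hc, hs0, hs1, hAC, hC⟩ := exists_eq_smul_smul_sub_one_of_hurwitz hA
  obtain ⟨m, P, T, hrank, hPC, hT⟩ := exists_rank_eq_mul_eq_mul_linfty_opNorm_le_one hC
  rw [Fintype.card_fin] at hrank
  have hnm : n ≤ m := hrank ▸ P.rank_le_height
  have : NeZero m := ⟨(hn.trans_le hnm).ne'⟩
  refine ⟨m, P, c • (s • T - 1), hnm, hrank, ?_, ?_⟩
  · simp [hAC, Matrix.mul_sub, Matrix.sub_mul, hPC]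
  · open scoped Matrix.Norms.Operator in
    refine muInf_smul_sub_one_neg hc ?_
    calc ‖s • T‖ = s * ‖T‖ := norm_smul_of_nonneg hs0 T
      _ < 1 := mul_lt_one_of_nonneg_of_lt_one_left hs0 hs1 hT
end

section
/- Let A ∈ ℝ^{n×n}, P ∈ ℝ^{m×n}, and Q ∈ ℝ^{m×m} satisfy P·A = Q·P. Let x : ℝ → ℝ^n be a solution of the continuous-time linear system, i.e., x is differentiable with x'(t) = A x(t) for all t. Then for all t ≥ 0, ‖P x(t)‖_∞ ≤ exp(μ_∞(Q)·t) · ‖P x(0)‖_∞. In particular, if μ_∞(Q) < 0, the polyhedral Lyapunov function V(x) = ‖P x‖_∞ decays exponentially along trajectories. -/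
open Matrix Finset

/-!
The logarithmic norm is the one-sided derivative of `h ↦ ‖1 + h Q‖` at `h = 0`. For the `∞`-norm
this is explicit: once `h > 0` is so small that the diagonal of `1 + h Q` is nonnegative, the `i`-th
absolute row sum equals `1 + h (Q i i + ∑_{j ≠ i} |Q i j|)`. Since `P` intertwines the dynamics
with `Q`, the curve `y = P x` solves `y' = Q y`, so the upper right derivative of `‖y‖` is at most
`μ_∞(Q) ‖y‖`, and Grönwall's inequality applies.
-/

open Filter Topology

section LogarithmicGronwall

variable {E : Type*} [NormedAddCommGroup E] [NormedSpace ℝ E]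

theorem eventually_slope_norm_lt {y : ℝ → E} {y' : E} {t c r : ℝ}
    (hy : HasDerivWithinAt y y' (Set.Ici t) t)
    (hc : ∀ᶠ h in 𝓝[>] (0 : ℝ), ‖y t + h • y'‖ ≤ ‖y t‖ + h * c) (hr : c < r) :
    ∀ᶠ z in 𝓝[>] t, slope (fun s => ‖y s‖) t z < r := by
  have h_error : Tendsto (fun z => c + ‖slope y t z - y'‖) (𝓝[>] t) (𝓝 c) := by
    have h_slope := (hasDerivWithinAt_iff_tendsto_slope' Set.self_notMem_Ioi).1 hy.Ioi_of_Ici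
    simpa using (tendsto_iff_norm_sub_tendsto_zero.1 h_slope).const_add c
  have h_shift : Tendsto (fun z => z - t) (𝓝[>] t) (𝓝[>] 0) := by
    refine tendsto_nhdsWithin_iff.2 ⟨?_, ?_⟩
    · exact ((continuous_sub_right t).tendsto' t 0 (sub_self t)).mono_left nhdsWithin_le_nhds
    · exact eventually_mem_nhdsWithin.mono fun z hz => Set.mem_Ioi.2 (sub_pos.2 hz)
  filter_upwards [h_error.eventually_lt_const hr, h_shift.eventually hc, self_mem_nhdsWithin]
    with z h_lt h_step hz
  have hzt : 0 < z - t := sub_pos.2 hz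
  refine lt_of_le_of_lt ?_ h_lt
  rw [slope_def_field, div_le_iff₀' hzt, sub_le_iff_le_add']
  calc
    ‖y z‖ = ‖(y t + (z - t) • y') + (z - t) • (slope y t z - y')‖ := by
      rw [smul_sub, sub_smul_slope, vsub_eq_sub]
      congr 1
      abel
    _ ≤ ‖y t + (z - t) • y'‖ + (z - t) * ‖slope y t z - y'‖ := by
      simpa only [norm_smul, Real.norm_of_nonneg hzt.le] using
        norm_add_le (y t + (z - t) • y') ((z - t) • (slope y t z - y'))
    _ ≤ ‖y t‖ + (z - t) * (c + ‖slope y t z - y'‖) := by linarith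

theorem norm_le_exp_mul_norm_of_norm_add_smul_deriv_le {y y' : ℝ → E} {a b K : ℝ}
    (hy : ContinuousOn y (Set.Icc a b))
    (hy' : ∀ t ∈ Set.Ico a b, HasDerivWithinAt y (y' t) (Set.Ici t) t)
    (hK : ∀ t ∈ Set.Ico a b, ∀ᶠ h in 𝓝[>] (0 : ℝ), ‖y t + h • y' t‖ ≤ (1 + h * K) * ‖y t‖) :
    ∀ t ∈ Set.Icc a b, ‖y t‖ ≤ Real.exp (K * (t - a)) * ‖y a‖ := by
  intro t ht
  rw [mul_comm, ← gronwallBound_ε0]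
  refine le_gronwallBound_of_liminf_deriv_right_le (f' := fun s => K * ‖y s‖) hy.norm
    (fun s hs r hr => ?_) le_rfl (fun s _ => (add_zero _).ge) t ht
  have h_step : ∀ᶠ h in 𝓝[>] (0 : ℝ), ‖y s + h • y' s‖ ≤ ‖y s‖ + h * (K * ‖y s‖) :=
    (hK s hs).mono fun h hh => hh.trans_eq (by ring)
  exact (eventually_slope_norm_lt (hy' s hs) h_step hr).frequently

end LogarithmicGronwall

theorem vecNormInf_eq_norm {m : ℕ} (v : Fin m → ℝ) : vecNormInf v = ‖v‖ :=
  (PiLp.norm_eq_ciSup (WithLp.toLp ⊤ v)).symm.trans (PiLp.norm_toLp v)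

section MatrixLogarithmicNorm

open scoped Matrix.Norms.Operator

theorem linfty_opNorm_le_iff {ι κ : Type*} [Fintype ι] [Fintype κ] {α : Type*}
    [SeminormedAddCommGroup α] {M : Matrix ι κ α} {c : ℝ} (hc : 0 ≤ c) :
    ‖M‖ ≤ c ↔ ∀ i, ∑ j, ‖M i j‖ ≤ c := by
  lift c to NNReal using hc
  rw [Matrix.linfty_opNorm_def, NNReal.coe_le_coe, Finset.sup_le_iff]
  simp [← NNReal.coe_le_coe]

theorem sum_abs_one_add_smul {ι : Type*} [Fintype ι] [DecidableEq ι] {R : Type*} [CommRing R]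
    [LinearOrder R] [IsStrictOrderedRing R] {Q : Matrix ι ι R} {h : R} {i : ι}
    (hh : 0 ≤ h) (hi : 0 ≤ 1 + h * Q i i) :
    ∑ j, |(1 + h • Q) i j| = 1 + h * (Q i i + ∑ j with j ≠ i, |Q i j|) := by
  have h_diag : |(1 + h • Q) i i| = 1 + h * Q i i := by simp [abs_of_nonneg hi]
  have h_off : ∀ j ∈ univ.erase i, |(1 + h • Q) i j| = h * |Q i j| := fun j hj => by
    simp [one_apply_ne' (ne_of_mem_erase hj), abs_mul, abs_of_nonneg hh]
  rw [← add_sum_erase _ _ (mem_univ i), h_diag, sum_congr rfl h_off, ← mul_sum, filter_ne']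
  ring

theorem row_le_muInf {m : ℕ} (Q : Matrix (Fin m) (Fin m) ℝ) (i : Fin m) :
    Q i i + ∑ j with j ≠ i, |Q i j| ≤ muInf Q :=
  le_ciSup (f := fun i => Q i i + ∑ j with j ≠ i, |Q i j|) (Set.finite_range _).bddAbove i

theorem eventually_norm_one_add_smul_le {m : ℕ} (Q : Matrix (Fin m) (Fin m) ℝ) :
    ∀ᶠ h in 𝓝[>] (0 : ℝ), ‖1 + h • Q‖ ≤ 1 + h * muInf Q := by
  have h_pos (q : ℝ) : ∀ᶠ h in 𝓝[>] (0 : ℝ), 0 < 1 + h * q := by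
    have h_lim : Tendsto (fun h => 1 + h * q) (𝓝 0) (𝓝 1) :=
      Continuous.tendsto' (by fun_prop) _ _ (by simp)
    exact (h_lim.mono_left nhdsWithin_le_nhds).eventually_const_lt one_pos
  filter_upwards [h_pos (muInf Q), eventually_all.2 fun i => h_pos (Q i i), self_mem_nhdsWithin]
    with h h_mu h_diag (hh : 0 < h)
  refine (linfty_opNorm_le_iff h_mu.le).2 fun i => ?_
  simp only [Real.norm_eq_abs]
  rw [sum_abs_one_add_smul hh.le (h_diag i).le]
  gcongr
  exact row_le_muInf Q i

theorem eventually_norm_add_smul_mulVec_le {m : ℕ} (Q : Matrix (Fin m) (Fin m) ℝ)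
    (v : Fin m → ℝ) :
    ∀ᶠ h in 𝓝[>] (0 : ℝ), ‖v + h • Q *ᵥ v‖ ≤ (1 + h * muInf Q) * ‖v‖ := by
  filter_upwards [eventually_norm_one_add_smul_le Q] with h hh
  calc
    ‖v + h • Q *ᵥ v‖ = ‖(1 + h • Q) *ᵥ v‖ := by rw [add_mulVec, one_mulVec, smul_mulVec]
    _ ≤ ‖1 + h • Q‖ * ‖v‖ := linfty_opNorm_mulVec _ _
    _ ≤ (1 + h * muInf Q) * ‖v‖ := by gcongr

end MatrixLogarithmicNorm

theorem polyhedral_lyapunov_decay_CT_general {E : Type*} [NormedAddCommGroup E] [NormedSpace ℝ E]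
    {m : ℕ} {f : ℝ → E → E} (P : E →L[ℝ] Fin m → ℝ) {Q : Matrix (Fin m) (Fin m) ℝ}
    {x : ℝ → E} {a b : ℝ} (hP : ∀ t ∈ Set.Ico a b, ∀ v, P (f t v) = Q *ᵥ P v)
    (hx : ContinuousOn x (Set.Icc a b))
    (hx' : ∀ t ∈ Set.Ico a b, HasDerivWithinAt x (f t (x t)) (Set.Ici t) t) :
    ∀ t ∈ Set.Icc a b,
      vecNormInf (P (x t)) ≤ Real.exp (muInf Q * (t - a)) * vecNormInf (P (x a)) := by
  have hy' : ∀ t ∈ Set.Ico a b,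
      HasDerivWithinAt (fun s => P (x s)) (Q *ᵥ P (x t)) (Set.Ici t) t := fun t ht =>
    hP t ht (x t) ▸ P.hasFDerivAt.comp_hasDerivWithinAt t (hx' t ht)
  simp only [vecNormInf_eq_norm]
  exact norm_le_exp_mul_norm_of_norm_add_smul_deriv_le (P.continuous.comp_continuousOn hx) hy'
    fun t _ => eventually_norm_add_smul_mulVec_le Q (P (x t))

/-- along any solution of `x' = A x`, the polyhedral Lyapunov function
`V(x) = ‖P x‖_∞` satisfies `V(x(t)) ≤ exp(μ_∞(Q) t) V(x(0))` for `t ≥ 0`, when `P A = Q P`. -/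
theorem polyhedral_lyapunov_decay_CT {n m : ℕ}
    (A : Matrix (Fin n) (Fin n) ℝ) (P : Matrix (Fin m) (Fin n) ℝ)
    (Q : Matrix (Fin m) (Fin m) ℝ) (hPA : P * A = Q * P)
    (x : ℝ → Fin n → ℝ) (hx : ∀ t : ℝ, HasDerivAt x (A.mulVec (x t)) t) :
    ∀ t : ℝ, 0 ≤ t →
      vecNormInf (P.mulVec (x t)) ≤
        Real.exp (muInf Q * t) * vecNormInf (P.mulVec (x 0)) := by
  intro t ht
  simpa using polyhedral_lyapunov_decay_CT_general (f := fun _ => A.mulVec)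
    P.mulVecLin.toContinuousLinearMap (fun _ _ v => by simp [hPA])
    (fun s _ => (hx s).continuousAt.continuousWithinAt) (fun s _ => (hx s).hasDerivWithinAt)
    t (Set.right_mem_Icc.2 ht)
end

section
/- Consider the uncertain discrete-time linear system x_{t+1} = A x_t + W w_t with A ∈ ℝ^{n×n}, W ∈ ℝ^{n×n_w}, disturbance signals w : ℕ → ℝ^{n_w} satisfying w̲ ≤ w_t ≤ w̄ for all t, and initial state x̲₀ ≤ x₀ ≤ x̄₀ (all inequalities entrywise). Define the embedding system x̲_{t+1} = A⁺ x̲_t − A⁻ x̄_t + W⁺ w̲ − W⁻ w̄ and x̄_{t+1} = A⁺ x̄_t − A⁻ x̲_t + W⁺ w̄ − W⁻ w̲, initialized at (x̲₀, x̄₀). Then the state framer property holds: x̲_t ≤ x_t ≤ x̄_t for all t ∈ ℕ. -/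
open Matrix Finset

/-!
Multiplication by an entrywise nonnegative matrix is monotone. Hence, if `M = P - N` with `P` and
`N` nonnegative, then `(a, c) ↦ P a - N c` increases in `a`, decreases in `c` and equals `M b` at
`a = c = b`, so that `a ≤ b ≤ c` gives `P a - N c ≤ M b ≤ P c - N a`. Applied to `A` and `W`, this
carries the framing from each time to the next.
-/

theorem mulVec_mono_of_nonneg {ι κ R : Type*} [Fintype κ] [Semiring R] [PartialOrder R]
    [IsOrderedRing R] {P : Matrix ι κ R} (hP : ∀ i j, 0 ≤ P i j) : Monotone (P *ᵥ ·) :=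
  fun _ _ h i => dotProduct_le_dotProduct_of_nonneg_left h (hP i)

/-- `M = P - N` with both parts entrywise nonnegative: the property of `M = M⁺ - M⁻` that makes the
embedding system a framer. Nonnegativity is stated entry by entry because the order that Mathlib
puts on matrices is the Loewner order. -/
structure IsNonnegSplitting {ι κ R : Type*} [Ring R] [PartialOrder R] (M P N : Matrix ι κ R) :
    Prop where
  eq_sub : M = P - N
  left_nonneg : ∀ i j, 0 ≤ P i j
  right_nonneg : ∀ i j, 0 ≤ N i j

namespace IsNonnegSplitting

variable {ι κ R : Type*} [Fintype κ] [Ring R] [PartialOrder R] [IsOrderedRing R]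
  {M P N : Matrix ι κ R} {a b c : κ → R}

theorem sub_le_mulVec (h : IsNonnegSplitting M P N) (hab : a ≤ b) (hbc : b ≤ c) :
    P *ᵥ a - N *ᵥ c ≤ M *ᵥ b := by
  rw [h.eq_sub, sub_mulVec]
  exact sub_le_sub (mulVec_mono_of_nonneg h.left_nonneg hab)
    (mulVec_mono_of_nonneg h.right_nonneg hbc)

theorem mulVec_le_sub (h : IsNonnegSplitting M P N) (hab : a ≤ b) (hbc : b ≤ c) :
    M *ᵥ b ≤ P *ᵥ c - N *ᵥ a := by
  rw [h.eq_sub, sub_mulVec]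
  exact sub_le_sub (mulVec_mono_of_nonneg h.left_nonneg hbc)
    (mulVec_mono_of_nonneg h.right_nonneg hab)

end IsNonnegSplitting

theorem embedding_framer_DT_general {ι κ R : Type*} [Fintype ι] [Fintype κ]
    [Ring R] [PartialOrder R] [IsOrderedRing R]
    {A Ap An : ℕ → Matrix ι ι R} {W Wp Wn : ℕ → Matrix ι κ R}
    (hA : ∀ t, IsNonnegSplitting (A t) (Ap t) (An t))
    (hW : ∀ t, IsNonnegSplitting (W t) (Wp t) (Wn t))
    {wlo w whi : ℕ → κ → R} (hw : ∀ t, wlo t ≤ w t ∧ w t ≤ whi t)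
    {x xlo xhi : ℕ → ι → R}
    (hx : ∀ t, x (t + 1) = A t *ᵥ x t + W t *ᵥ w t)
    (hlo : ∀ t, xlo (t + 1) ≤
      Ap t *ᵥ xlo t - An t *ᵥ xhi t + Wp t *ᵥ wlo t - Wn t *ᵥ whi t)
    (hhi : ∀ t,
      Ap t *ᵥ xhi t - An t *ᵥ xlo t + Wp t *ᵥ whi t - Wn t *ᵥ wlo t ≤ xhi (t + 1))
    (h0 : xlo 0 ≤ x 0 ∧ x 0 ≤ xhi 0) (t : ℕ) :
    xlo t ≤ x t ∧ x t ≤ xhi t := by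
  induction t with
  | zero => exact h0
  | succ t ih =>
    obtain ⟨hxlo, hxhi⟩ := ih
    obtain ⟨hwlo, hwhi⟩ := hw t
    simp only [add_sub_assoc] at hlo hhi
    rw [hx]
    constructor
    · exact (hlo t).trans <|
        add_le_add ((hA t).sub_le_mulVec hxlo hxhi) ((hW t).sub_le_mulVec hwlo hwhi)
    · exact (add_le_add ((hA t).mulVec_le_sub hxlo hxhi)
        ((hW t).mulVec_le_sub hwlo hwhi)).trans (hhi t)

theorem isNonnegSplitting_matPos_matNeg {p q : ℕ} (M : Matrix (Fin p) (Fin q) ℝ) :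
    IsNonnegSplitting M (matPos M) (matNeg M) where
  eq_sub := (sub_sub_cancel (matPos M) M).symm
  left_nonneg _ _ := le_max_right _ _
  right_nonneg _ _ := sub_nonneg.2 (le_max_left _ _)

/-- state framer property of the discrete-time mixed-monotone embedding
system for `x⁺ = A x + W w` with bounded disturbance. -/
theorem embedding_framer_DT {n nw : ℕ}
    (A : Matrix (Fin n) (Fin n) ℝ) (W : Matrix (Fin n) (Fin nw) ℝ)
    (wlo whi : Fin nw → ℝ) (w : ℕ → Fin nw → ℝ)
    (hw : ∀ t, wlo ≤ w t ∧ w t ≤ whi)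
    (x xlo xhi : ℕ → Fin n → ℝ)
    (hx : ∀ t, x (t + 1) = A.mulVec (x t) + W.mulVec (w t))
    (hlo : ∀ t, xlo (t + 1) =
      (matPos A).mulVec (xlo t) - (matNeg A).mulVec (xhi t)
        + (matPos W).mulVec wlo - (matNeg W).mulVec whi)
    (hhi : ∀ t, xhi (t + 1) =
      (matPos A).mulVec (xhi t) - (matNeg A).mulVec (xlo t)
        + (matPos W).mulVec whi - (matNeg W).mulVec wlo)
    (h0 : xlo 0 ≤ x 0 ∧ x 0 ≤ xhi 0) :
    ∀ t : ℕ, xlo t ≤ x t ∧ x t ≤ xhi t := by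
  exact embedding_framer_DT_general (fun _ => isNonnegSplitting_matPos_matNeg A)
    (fun _ => isNonnegSplitting_matPos_matNeg W) hw hx (fun t => (hlo t).le)
    (fun t => (hhi t).ge) h0
end

section
/- (Correctness of the proposed observer, continuous-time case.) Consider the continuous-time linear system x'(t) = A x(t) + B u(t) + W w(t), y(t) = C x(t) + D u(t) + V v(t), where x : ℝ → ℝ^n is differentiable, u, w, v are continuous signals with w̲ ≤ w(t) ≤ w̄ and v̲ ≤ v(t) ≤ v̄ for all t ≥ 0 (entrywise). Let L ∈ ℝ^{n×l}, and suppose P ∈ ℝ^{m×n} and Q ∈ ℝ^{m×m} satisfy P(A − LC) = QP. Let z̲, z̄ : ℝ → ℝ^m be differentiable and satisfy z̲'(t) = Q↑ z̲(t) − Q↓ z̄(t) + (PW)⁺ w̲ − (PW)⁻ w̄ + (PLV)⁻ v̲ − (PLV)⁺ v̄ + PL y(t) + P(B − LD) u(t) and z̄'(t) = Q↑ z̄(t) − Q↓ z̲(t) + (PW)⁺ w̄ − (PW)⁻ w̲ + (PLV)⁻ v̄ − (PLV)⁺ v̲ + PL y(t) + P(B − LD) u(t), with z̲(0) ≤ P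 x(0) ≤ z̄(0). Then z̲(t) ≤ P x(t) ≤ z̄(t) for all t ≥ 0. -/
open Matrix Finset

/-!
The transformed state `z = P x` satisfies `z' = Q z + d`, where `d` collects the measured signals
and the disturbance `P W w - P L V v`. Splitting `P W` and `P L V` into positive and negative parts
encloses `d` between the inputs of the two observer equations, and splitting `Q = Q↑ - Q↓` shows
that the stacked framing errors `e = (z - z̲, z̄ - z)` satisfy `e' ≥ M e`, where `M` is Metzler,
with diagonal blocks `Q↑` and off-diagonal blocks `Q↓`. Such a differential inequality keeps `e` in
the nonnegative orthant: after adding `ε exp (K t)` to every coordinate, with `K` larger than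
all row sums of `M`, a coordinate that reaches zero has positive derivative there, and then one
lets `ε → 0`.
-/

open Topology

section PositiveSystems

variable {ι κ R : Type*}

/-- A Metzler matrix: all off-diagonal entries are nonnegative. These are the generators of linear
systems that preserve the nonnegative orthant. -/
def IsMetzler [Zero R] [LE R] (M : Matrix ι ι R) : Prop :=
  ∀ ⦃i j⦄, i ≠ j → 0 ≤ M i j

theorem IsMetzler.fromBlocks [Zero R] [LE R] {M : Matrix ι ι R} {N : Matrix ι κ R}
    {N' : Matrix κ ι R} {M' : Matrix κ κ R} (hM : IsMetzler M)
    (hN : ∀ i j, 0 ≤ N i j) (hN' : ∀ i j, 0 ≤ N' i j) (hM' : IsMetzler M') :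
    IsMetzler (Matrix.fromBlocks M N N' M') := by
  rintro (i | i) (j | j) hij
  · exact hM (ne_of_apply_ne Sum.inl hij)
  · exact hN i j
  · exact hN' i j
  · exact hM' (ne_of_apply_ne Sum.inr hij)

variable [Semiring R] [PartialOrder R] [IsOrderedRing R] [Fintype κ]

theorem mulVec_le_mulVec_of_nonneg {M : Matrix ι κ R} (hM : ∀ i j, 0 ≤ M i j) {v w : κ → R}
    (hvw : v ≤ w) : M *ᵥ v ≤ M *ᵥ w :=
  fun i ↦ dotProduct_le_dotProduct_of_nonneg_left hvw (hM i)

theorem IsMetzler.mulVec_apply_nonneg {M : Matrix κ κ R} (hM : IsMetzler M) {v : κ → R}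
    (hv : 0 ≤ v) {i : κ} (hvi : v i = 0) : 0 ≤ (M *ᵥ v) i := by
  refine Finset.sum_nonneg fun j _ ↦ ?_
  obtain rfl | hij := eq_or_ne i j
  · rw [hvi, mul_zero]
  · exact mul_nonneg (hM hij) (hv j)

end PositiveSystems

section Comparison

theorem eventually_nhdsGT_lt_of_hasDerivWithinAt_pos {f : ℝ → ℝ} {f' t : ℝ}
    (hf : HasDerivWithinAt f f' (Set.Ici t) t) (hf' : 0 < f') : ∀ᶠ s in 𝓝[>] t, f t < f s := by
  have hslope := (hasDerivWithinAt_iff_tendsto_slope' Set.self_notMem_Ioi).1 hf.Ioi_of_Ici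
  filter_upwards [hslope.eventually_const_lt hf', self_mem_nhdsWithin] with s hs hts
  rw [slope_def_field, div_pos_iff_of_pos_right (sub_pos.2 hts)] at hs
  exact sub_pos.1 hs

variable {ι : Type*} {f f' : ℝ → ι → ℝ} {a b : ℝ}

theorem nonneg_of_forall_deriv_right_pos_of_eq_zero [Finite ι]
    (hfc : ContinuousOn f (Set.Icc a b))
    (hf : ∀ t ∈ Set.Ico a b, HasDerivWithinAt f (f' t) (Set.Ici t) t) (ha : 0 ≤ f a)
    (hf' : ∀ t ∈ Set.Ico a b, 0 ≤ f t → ∀ i, f t i = 0 → 0 < f' t i) :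
    ∀ t ∈ Set.Icc a b, 0 ≤ f t := by
  have := Fintype.ofFinite ι
  refine IsClosed.Icc_subset_of_forall_mem_nhdsWithin (s := {t | 0 ≤ f t}) ?_ ha ?_
  · rw [Set.inter_comm]
    exact hfc.preimage_isClosed_of_isClosed isClosed_Icc isClosed_Ici
  rintro t ⟨hft, ht⟩
  suffices ∀ i, ∀ᶠ s in 𝓝[>] t, 0 ≤ f s i from Filter.eventually_all.2 this
  intro i
  have hfi := hasDerivWithinAt_pi.1 (hf t ht) i
  obtain hi | hi := (hft i).eq_or_lt
  · filter_upwards [eventually_nhdsGT_lt_of_hasDerivWithinAt_pos hfi (hf' t ht hft i hi.symm)]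
      with s hs using hi.le.trans hs.le
  · have hcont := hfi.continuousWithinAt.mono Set.Ioi_subset_Ici_self
    exact (hcont.eventually_const_lt hi).mono fun _ ↦ le_of_lt

theorem IsMetzler.nonneg_of_mulVec_le_deriv_right [Fintype ι] {M : Matrix ι ι ℝ} (hM : IsMetzler M)
    (hfc : ContinuousOn f (Set.Icc a b))
    (hf : ∀ t ∈ Set.Ico a b, HasDerivWithinAt f (f' t) (Set.Ici t) t) (ha : 0 ≤ f a)
    (hf' : ∀ t ∈ Set.Ico a b, M *ᵥ f t ≤ f' t) : ∀ t ∈ Set.Icc a b, 0 ≤ f t := by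
  obtain ⟨K, hK⟩ : ∃ K : ℝ, ∀ i, (M *ᵥ 1) i < K :=
    (Filter.eventually_all.2 fun i ↦ Filter.eventually_gt_atTop _).exists
  -- Since `K` exceeds every row sum, adding `ε exp (K t)` makes the inequality strict.
  have hperturbed : ∀ ε > 0, ∀ t ∈ Set.Icc a b, 0 ≤ f t + (ε * Real.exp (K * t)) • 1 := by
    intro ε hε
    have hexp (t : ℝ) :
        HasDerivAt (fun s ↦ ε * Real.exp (K * s)) (ε * Real.exp (K * t) * K) t := by
      simpa [mul_assoc] using (((hasDerivAt_id t).const_mul K).exp).const_mul ε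
    refine nonneg_of_forall_deriv_right_pos_of_eq_zero (by fun_prop)
      (fun t ht ↦ (hf t ht).add ((hexp t).smul_const 1).hasDerivWithinAt)
      (add_nonneg ha (smul_nonneg (by positivity) zero_le_one)) fun t ht hnonneg i hi ↦ ?_
    have hMi := hM.mulVec_apply_nonneg hnonneg hi
    simp only [mulVec_add, mulVec_smul, Pi.add_apply, Pi.smul_apply, Pi.one_apply,
      smul_eq_mul, mul_one] at hMi ⊢
    have hrow := mul_lt_mul_of_pos_left (hK i) (mul_pos hε (Real.exp_pos (K * t)))
    linarith [hf' t ht i]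
  intro t ht i
  refine le_of_forall_pos_le_add fun δ hδ ↦ ?_
  simpa [(Real.exp_pos (K * t)).ne'] using
    hperturbed (δ / Real.exp (K * t)) (by positivity) t ht i

end Comparison

section SignSplitting

variable {p q : ℕ}

theorem matPos_nonneg (M : Matrix (Fin p) (Fin q) ℝ) (i : Fin p) (j : Fin q) :
    0 ≤ matPos M i j :=
  le_max_right _ _

theorem matNeg_nonneg (M : Matrix (Fin p) (Fin q) ℝ) (i : Fin p) (j : Fin q) :
    0 ≤ matNeg M i j :=
  sub_nonneg.2 (le_max_left _ _)

theorem matPos_sub_matNeg (M : Matrix (Fin p) (Fin q) ℝ) : matPos M - matNeg M = M :=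
  sub_sub_cancel _ _

theorem isMetzler_matUp (Q : Matrix (Fin p) (Fin p) ℝ) : IsMetzler (matUp Q) := by
  intro i j hij
  simp [matUp, hij]

theorem matDown_nonneg (Q : Matrix (Fin p) (Fin p) ℝ) (i j : Fin p) : 0 ≤ matDown Q i j := by
  by_cases hij : i = j <;> simp [matDown, hij]

theorem matUp_sub_matDown (Q : Matrix (Fin p) (Fin p) ℝ) : matUp Q - matDown Q = Q := by
  ext i j
  by_cases hij : i = j <;> simp [matUp, matDown, hij]

theorem mulVec_mem_Icc_of_mem_Icc (M : Matrix (Fin p) (Fin q) ℝ) {v lo hi : Fin q → ℝ}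
    (hv : v ∈ Set.Icc lo hi) :
    M *ᵥ v ∈ Set.Icc (matPos M *ᵥ lo - matNeg M *ᵥ hi) (matPos M *ᵥ hi - matNeg M *ᵥ lo) := by
  have hsplit : M *ᵥ v = matPos M *ᵥ v - matNeg M *ᵥ v := by
    rw [← sub_mulVec, matPos_sub_matNeg]
  have hpos {v w : Fin q → ℝ} : v ≤ w → matPos M *ᵥ v ≤ matPos M *ᵥ w :=
    mulVec_le_mulVec_of_nonneg (matPos_nonneg M)
  have hneg {v w : Fin q → ℝ} : v ≤ w → matNeg M *ᵥ v ≤ matNeg M *ᵥ w :=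
    mulVec_le_mulVec_of_nonneg (matNeg_nonneg M)
  rw [hsplit]
  exact ⟨sub_le_sub (hpos hv.1) (hneg hv.2), sub_le_sub (hpos hv.2) (hneg hv.1)⟩

end SignSplitting

section Framing

variable {ι κ : Type*}

theorem continuousOn_sumElim {X Y : Type*} [TopologicalSpace X] [TopologicalSpace Y]
    {f : X → ι → Y} {g : X → κ → Y} {s : Set X}
    (hf : ContinuousOn f s) (hg : ContinuousOn g s) :
    ContinuousOn (fun t ↦ Sum.elim (f t) (g t)) s := by
  rw [continuousOn_pi] at hf hg ⊢
  rintro (i | i)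
  · exact hf i
  · exact hg i

theorem hasDerivWithinAt_sumElim {𝕜 E : Type*} [NontriviallyNormedField 𝕜]
    [NormedAddCommGroup E] [NormedSpace 𝕜 E] [Finite ι] [Finite κ] {f : 𝕜 → ι → E}
    {g : 𝕜 → κ → E} {f' : ι → E} {g' : κ → E} {s : Set 𝕜} {t : 𝕜}
    (hf : HasDerivWithinAt f f' s t) (hg : HasDerivWithinAt g g' s t) :
    HasDerivWithinAt (fun t ↦ Sum.elim (f t) (g t)) (Sum.elim f' g') s t := by
  have := Fintype.ofFinite ι
  have := Fintype.ofFinite κ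
  rw [hasDerivWithinAt_pi] at hf hg ⊢
  rintro (i | i)
  · exact hf i
  · exact hg i

variable {m : ℕ} (Q : Matrix (Fin m) (Fin m) ℝ)

/-- The matrix governing the stacked framing errors of the interval observer of `z' = Q z + d`; the
first block indexes the lower error `z - z̲`, the second the upper error `z̄ - z`. -/
def framingErrorMatrix : Matrix (Fin m ⊕ Fin m) (Fin m ⊕ Fin m) ℝ :=
  fromBlocks (matUp Q) (matDown Q) (matDown Q) (matUp Q)

theorem isMetzler_framingErrorMatrix : IsMetzler (framingErrorMatrix Q) :=
  (isMetzler_matUp Q).fromBlocks (matDown_nonneg Q) (matDown_nonneg Q) (isMetzler_matUp Q)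

theorem framingErrorMatrix_mulVec_le {z zlo zhi d dlo dhi : Fin m → ℝ}
    (hd : d ∈ Set.Icc dlo dhi) :
    framingErrorMatrix Q *ᵥ Sum.elim (z - zlo) (zhi - z) ≤
      Sum.elim (Q *ᵥ z + d - (matUp Q *ᵥ zlo - matDown Q *ᵥ zhi + dlo))
        (matUp Q *ᵥ zhi - matDown Q *ᵥ zlo + dhi - (Q *ᵥ z + d)) := by
  have hQz : Q *ᵥ z = matUp Q *ᵥ z - matDown Q *ᵥ z := by
    rw [← sub_mulVec, matUp_sub_matDown]
  rw [framingErrorMatrix, fromBlocks_mulVec, hQz]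
  rintro (i | i) <;>
    simp only [Sum.elim_inl, Sum.elim_inr, Sum.elim_comp_inl, Sum.elim_comp_inr, mulVec_sub,
      Pi.add_apply, Pi.sub_apply] <;>
    linarith [hd.1 i, hd.2 i]

theorem mem_Icc_of_hasDerivWithinAt_matUp_matDown
    {z zlo zhi d dlo dhi : ℝ → Fin m → ℝ} {a b : ℝ}
    (hzc : ContinuousOn z (Set.Icc a b)) (hloc : ContinuousOn zlo (Set.Icc a b))
    (hhic : ContinuousOn zhi (Set.Icc a b))
    (hz : ∀ t ∈ Set.Ico a b, HasDerivWithinAt z (Q *ᵥ z t + d t) (Set.Ici t) t)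
    (hlo : ∀ t ∈ Set.Ico a b,
      HasDerivWithinAt zlo (matUp Q *ᵥ zlo t - matDown Q *ᵥ zhi t + dlo t) (Set.Ici t) t)
    (hhi : ∀ t ∈ Set.Ico a b,
      HasDerivWithinAt zhi (matUp Q *ᵥ zhi t - matDown Q *ᵥ zlo t + dhi t) (Set.Ici t) t)
    (hd : ∀ t ∈ Set.Ico a b, d t ∈ Set.Icc (dlo t) (dhi t))
    (ha : z a ∈ Set.Icc (zlo a) (zhi a)) :
    ∀ t ∈ Set.Icc a b, z t ∈ Set.Icc (zlo t) (zhi t) := by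
  have herror_init : 0 ≤ Sum.elim (z a - zlo a) (zhi a - z a) :=
    Sum.rec (fun i ↦ sub_nonneg.2 (ha.1 i)) (fun i ↦ sub_nonneg.2 (ha.2 i))
  have herror_nonneg := (isMetzler_framingErrorMatrix Q).nonneg_of_mulVec_le_deriv_right
    (continuousOn_sumElim (hzc.sub hloc) (hhic.sub hzc))
    (fun t ht ↦ hasDerivWithinAt_sumElim ((hz t ht).sub (hlo t ht)) ((hhi t ht).sub (hz t ht)))
    herror_init fun t ht ↦ framingErrorMatrix_mulVec_le Q (hd t ht)
  exact fun t ht ↦ ⟨fun i ↦ sub_nonneg.1 (herror_nonneg t ht (Sum.inl i)),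
    fun i ↦ sub_nonneg.1 (herror_nonneg t ht (Sum.inr i))⟩

end Framing

section Observer

theorem hasDerivWithinAt_mulVec {𝕜 ι κ : Type*} [NontriviallyNormedField 𝕜] [Finite ι]
    [Fintype κ] (M : Matrix ι κ 𝕜) {f : 𝕜 → κ → 𝕜} {f' : κ → 𝕜} {s : Set 𝕜} {t : 𝕜}
    (hf : HasDerivWithinAt f f' s t) : HasDerivWithinAt (fun t ↦ M *ᵥ f t) (M *ᵥ f') s t :=
  have := Fintype.ofFinite ι
  hasDerivWithinAt_pi.2 fun i ↦
    HasDerivWithinAt.fun_sum fun j _ ↦ (hasDerivWithinAt_pi.1 hf j).const_mul (M i j)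

theorem mulVec_dynamics_eq_of_mul_sub_eq_mul {R ι κ ν υ ω η : Type*} [Ring R] [Fintype ι]
    [Fintype κ] [Fintype ν] [Fintype υ] [Fintype ω] [Fintype η] {A : Matrix ν ν R}
    {B : Matrix ν υ R} {W : Matrix ν ω R} {C : Matrix κ ν R} {D : Matrix κ υ R}
    {V : Matrix κ η R} {L : Matrix ν κ R} {P : Matrix ι ν R} {Q : Matrix ι ι R}
    (hPQ : P * (A - L * C) = Q * P) {x : ν → R} {u : υ → R} {w : ω → R} {v : η → R}
    {y : κ → R} (hy : y = C *ᵥ x + D *ᵥ u + V *ᵥ v) :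
    P *ᵥ (A *ᵥ x + B *ᵥ u + W *ᵥ w) =
      Q *ᵥ (P *ᵥ x) + ((P * W) *ᵥ w - (P * L * V) *ᵥ v
        + ((P * L) *ᵥ y + (P * (B - L * D)) *ᵥ u)) := by
  rw [mulVec_mulVec, ← hPQ, hy]
  simp only [mulVec_add, mulVec_mulVec, Matrix.mul_sub, sub_mulVec, Matrix.mul_assoc]
  abel

/-- One-sided derivatives admit inputs and disturbances with jumps, such as piecewise constant
ones. -/
theorem observer_correctness_CT_general {n m s l nw nv : ℕ}
    (A : Matrix (Fin n) (Fin n) ℝ) (B : Matrix (Fin n) (Fin s) ℝ)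
    (W : Matrix (Fin n) (Fin nw) ℝ) (C : Matrix (Fin l) (Fin n) ℝ)
    (D : Matrix (Fin l) (Fin s) ℝ) (V : Matrix (Fin l) (Fin nv) ℝ)
    (L : Matrix (Fin n) (Fin l) ℝ)
    (P : Matrix (Fin m) (Fin n) ℝ) (Q : Matrix (Fin m) (Fin m) ℝ)
    (hPQ : P * (A - L * C) = Q * P)
    (u : ℝ → Fin s → ℝ) (w wlo whi : ℝ → Fin nw → ℝ) (v vlo vhi : ℝ → Fin nv → ℝ)
    (hw : ∀ t, 0 ≤ t → wlo t ≤ w t ∧ w t ≤ whi t)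
    (hv : ∀ t, 0 ≤ t → vlo t ≤ v t ∧ v t ≤ vhi t)
    (x : ℝ → Fin n → ℝ) (y : ℝ → Fin l → ℝ) (zlo zhi : ℝ → Fin m → ℝ)
    (hxc : ContinuousOn x (Set.Ici 0)) (hloc : ContinuousOn zlo (Set.Ici 0))
    (hhic : ContinuousOn zhi (Set.Ici 0))
    (hx : ∀ t, 0 ≤ t →
      HasDerivWithinAt x (A *ᵥ x t + B *ᵥ u t + W *ᵥ w t) (Set.Ici t) t)
    (hy : ∀ t, 0 ≤ t → y t = C *ᵥ x t + D *ᵥ u t + V *ᵥ v t)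
    (hlo : ∀ t, 0 ≤ t → HasDerivWithinAt zlo
      (matUp Q *ᵥ zlo t - matDown Q *ᵥ zhi t
        + matPos (P * W) *ᵥ wlo t - matNeg (P * W) *ᵥ whi t
        + matNeg (P * L * V) *ᵥ vlo t - matPos (P * L * V) *ᵥ vhi t
        + (P * L) *ᵥ y t + (P * (B - L * D)) *ᵥ u t) (Set.Ici t) t)
    (hhi : ∀ t, 0 ≤ t → HasDerivWithinAt zhi
      (matUp Q *ᵥ zhi t - matDown Q *ᵥ zlo t
        + matPos (P * W) *ᵥ whi t - matNeg (P * W) *ᵥ wlo t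
        + matNeg (P * L * V) *ᵥ vhi t - matPos (P * L * V) *ᵥ vlo t
        + (P * L) *ᵥ y t + (P * (B - L * D)) *ᵥ u t) (Set.Ici t) t)
    (h0 : zlo 0 ≤ P *ᵥ x 0 ∧ P *ᵥ x 0 ≤ zhi 0) :
    ∀ t, 0 ≤ t → zlo t ≤ P *ᵥ x t ∧ P *ᵥ x t ≤ zhi t := by
  intro T hT
  have hIcc : Set.Icc 0 T ⊆ Set.Ici 0 := Set.Icc_subset_Ici_self
  let known (t : ℝ) : Fin m → ℝ := (P * L) *ᵥ y t + (P * (B - L * D)) *ᵥ u t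
  have hPx (t : ℝ) (ht : 0 ≤ t) := hasDerivWithinAt_mulVec P (hx t ht)
  have hPxc : ContinuousOn (fun t ↦ P *ᵥ x t) (Set.Ici 0) := by fun_prop
  refine mem_Icc_of_hasDerivWithinAt_matUp_matDown Q
    (d := fun t ↦ (P * W) *ᵥ w t - (P * L * V) *ᵥ v t + known t)
    (dlo := fun t ↦ matPos (P * W) *ᵥ wlo t - matNeg (P * W) *ᵥ whi t
      - (matPos (P * L * V) *ᵥ vhi t - matNeg (P * L * V) *ᵥ vlo t) + known t)
    (dhi := fun t ↦ matPos (P * W) *ᵥ whi t - matNeg (P * W) *ᵥ wlo t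
      - (matPos (P * L * V) *ᵥ vlo t - matNeg (P * L * V) *ᵥ vhi t) + known t)
    (hPxc.mono hIcc) (hloc.mono hIcc) (hhic.mono hIcc)
    (fun t ht ↦ ?_) (fun t ht ↦ ?_) (fun t ht ↦ ?_) (fun t ht ↦ ?_) h0 T ⟨hT, le_rfl⟩
  · rw [← mulVec_dynamics_eq_of_mul_sub_eq_mul hPQ (hy t ht.1)]
    exact hPx t ht.1
  · exact (hlo t ht.1).congr_deriv (by simp only [known]; abel)
  · exact (hhi t ht.1).congr_deriv (by simp only [known]; abel)
  · have hPW := mulVec_mem_Icc_of_mem_Icc (P * W) (hw t ht.1)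
    have hPLV := mulVec_mem_Icc_of_mem_Icc (P * L * V) (hv t ht.1)
    exact ⟨by gcongr; exacts [hPW.1, hPLV.2], by gcongr; exacts [hPW.2, hPLV.1]⟩

end Observer

/-- correctness of the proposed observer (continuous-time case):
the observer states frame the transformed true state, `z̲(t) ≤ P x(t) ≤ z̄(t)` for `t ≥ 0`. -/
theorem observer_correctness_CT {n m s l nw nv : ℕ}
    (A : Matrix (Fin n) (Fin n) ℝ) (B : Matrix (Fin n) (Fin s) ℝ)
    (W : Matrix (Fin n) (Fin nw) ℝ) (C : Matrix (Fin l) (Fin n) ℝ)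
    (D : Matrix (Fin l) (Fin s) ℝ) (V : Matrix (Fin l) (Fin nv) ℝ)
    (L : Matrix (Fin n) (Fin l) ℝ)
    (P : Matrix (Fin m) (Fin n) ℝ) (Q : Matrix (Fin m) (Fin m) ℝ)
    (hPQ : P * (A - L * C) = Q * P)
    (u : ℝ → Fin s → ℝ) (w : ℝ → Fin nw → ℝ) (v : ℝ → Fin nv → ℝ)
    (hu : Continuous u) (hwc : Continuous w) (hvc : Continuous v)
    (wlo whi : Fin nw → ℝ) (vlo vhi : Fin nv → ℝ)
    (hw : ∀ t : ℝ, 0 ≤ t → wlo ≤ w t ∧ w t ≤ whi)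
    (hv : ∀ t : ℝ, 0 ≤ t → vlo ≤ v t ∧ v t ≤ vhi)
    (x : ℝ → Fin n → ℝ) (y : ℝ → Fin l → ℝ)
    (hx : ∀ t : ℝ, HasDerivAt x
      (A.mulVec (x t) + B.mulVec (u t) + W.mulVec (w t)) t)
    (hy : ∀ t : ℝ, y t = C.mulVec (x t) + D.mulVec (u t) + V.mulVec (v t))
    (zlo zhi : ℝ → Fin m → ℝ)
    (hlo : ∀ t : ℝ, HasDerivAt zlo
      ((matUp Q).mulVec (zlo t) - (matDown Q).mulVec (zhi t)
        + (matPos (P * W)).mulVec wlo - (matNeg (P * W)).mulVec whi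
        + (matNeg (P * L * V)).mulVec vlo - (matPos (P * L * V)).mulVec vhi
        + (P * L).mulVec (y t) + (P * (B - L * D)).mulVec (u t)) t)
    (hhi : ∀ t : ℝ, HasDerivAt zhi
      ((matUp Q).mulVec (zhi t) - (matDown Q).mulVec (zlo t)
        + (matPos (P * W)).mulVec whi - (matNeg (P * W)).mulVec wlo
        + (matNeg (P * L * V)).mulVec vhi - (matPos (P * L * V)).mulVec vlo
        + (P * L).mulVec (y t) + (P * (B - L * D)).mulVec (u t)) t)
    (h0 : zlo 0 ≤ P.mulVec (x 0) ∧ P.mulVec (x 0) ≤ zhi 0) :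
    ∀ t : ℝ, 0 ≤ t → zlo t ≤ P.mulVec (x t) ∧ P.mulVec (x t) ≤ zhi t := by
  exact observer_correctness_CT_general A B W C D V L P Q hPQ u w (fun _ ↦ wlo) (fun _ ↦ whi)
    v (fun _ ↦ vlo) (fun _ ↦ vhi) hw hv x y zlo zhi
    (HasDerivAt.continuousOn fun t _ ↦ hx t) (HasDerivAt.continuousOn fun t _ ↦ hlo t)
    (HasDerivAt.continuousOn fun t _ ↦ hhi t) (fun t _ ↦ (hx t).hasDerivWithinAt)
    (fun t _ ↦ hy t) (fun t _ ↦ (hlo t).hasDerivWithinAt)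
    (fun t _ ↦ (hhi t).hasDerivWithinAt) h0
end

section
/- (Continuous-time block construction.) Let m ≥ 2 be an integer, let σ, ω ∈ ℝ, set θ := π/m, ξ := σ − ω·(cos θ/sin θ), and ψ := ω/sin θ. Define P_m ∈ ℝ^{m×2} by (P_m)_{k,1} = cos(kθ) and (P_m)_{k,2} = sin(kθ) for k = 0, …, m−1; define Λ := [[σ, ω], [−ω, σ]] ∈ ℝ^{2×2}; and define Q_m ∈ ℝ^{m×m} by (Q_m)_{kk} = ξ for all k, (Q_m)_{k,k+1} = ψ for k = 0, …, m−2, (Q_m)_{m−1,0} = −ψ, and all other entries zero. Then: (i) P_m · Λ = Q_m · P_m; (ii) μ_∞(Q_m) = ξ + |ψ|; and (iii) if ω > 0 and σ/ω < (cos θ − 1)/sin θ, then μ_∞(Q_m) < 0. -/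
open Matrix Finset

/-- The `m × 2` block `P_m` with rows `(cos kθ, sin kθ)`, `k = 0, …, m−1`, `θ = π/m`. -/
noncomputable def Pblock (m : ℕ) : Matrix (Fin m) (Fin 2) ℝ :=
  Matrix.of fun k j =>
    if j = 0 then Real.cos ((k : ℝ) * (Real.pi / m)) else Real.sin ((k : ℝ) * (Real.pi / m))

/-- The `m × m` block `Q_m` with `ξ` on the diagonal, `ψ` on the superdiagonal,
`−ψ` in the bottom-left corner, and zeros elsewhere. -/
def Qblock (m : ℕ) (ξ ψ : ℝ) : Matrix (Fin m) (Fin m) ℝ :=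
  Matrix.of fun k l =>
    if (l : ℕ) = (k : ℕ) then ξ
    else if (l : ℕ) = (k : ℕ) + 1 then ψ
    else if (k : ℕ) = m - 1 ∧ (l : ℕ) = 0 then -ψ
    else 0

/-!
`Λ = ξ • 1 + ψ • R`, where `R` acts on row vectors as the rotation by `θ`, and the rows of `P_m` are
the successive rotations of the first one. Right multiplication by `Λ` is therefore the combination
`ξ • row k + ψ • row (k + 1)`. As `m θ = π`, the row of index `m` is minus the row of index `0`,
and `Q_m` encodes this combination: it is `ξ • 1` plus `ψ` times the negacyclic shift. Off the
diagonal each of its rows has the single entry `±ψ`, so the maximum defining `μ_∞` is over a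
constant.
-/

lemma coe_finRotate_eq_ite {m : ℕ} (k : Fin m) :
    (finRotate m k : ℕ) = if (k : ℕ) + 1 = m then 0 else (k : ℕ) + 1 := by
  cases m with
  | zero => exact k.elim0
  | succ n => simp only [coe_finRotate, Fin.ext_iff, Fin.val_last, add_left_inj]

lemma finRotate_ne_self {m : ℕ} (hm : 2 ≤ m) (k : Fin m) : finRotate m k ≠ k := by
  rw [← Equiv.Perm.mem_support, support_finRotate_of_le hm]
  exact mem_univ k

lemma Qblock_row_eq_single_add_single {m : ℕ} (hm : 2 ≤ m) (ξ ψ : ℝ) (k : Fin m) :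
    Qblock m ξ ψ k =
      Pi.single k ξ + Pi.single (finRotate m k) (if (k : ℕ) + 1 = m then -ψ else ψ) := by
  ext l
  have hrot := coe_finRotate_eq_ite k
  simp only [Qblock, Matrix.of_apply, Pi.add_apply, Pi.single_apply, Fin.ext_iff, hrot]
  grind

lemma Qblock_mul_apply_of_eq_neg {m : ℕ} {ι : Type*} (hm : 2 ≤ m) (ξ ψ : ℝ) {g : ℕ → ι → ℝ}
    (hg : g m = -g 0) (k : Fin m) :
    (Qblock m ξ ψ * Matrix.of fun l : Fin m => g l) k = ξ • g k + ψ • g (k + 1) := by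
  have hrow (l : Fin m) : (Matrix.of fun l : Fin m => g l).row l = g l := rfl
  rw [Matrix.mul_apply_eq_vecMul, Qblock_row_eq_single_add_single hm, Matrix.add_vecMul,
    Matrix.single_vecMul, Matrix.single_vecMul, hrow, hrow, coe_finRotate_eq_ite]
  split_ifs with hlast
  · rw [hlast, hg, smul_neg, neg_smul]
  · rfl

lemma diag_add_sum_abs_offDiag_of_row_eq {ι α : Type*} [Fintype ι] [DecidableEq ι]
    [AddCommGroup α] [LinearOrder α] [IsOrderedAddMonoid α] {Q : Matrix ι ι α} {i j : ι}
    {a b : α} (hji : j ≠ i) (hrow : Q i = Pi.single i a + Pi.single j b) :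
    Q i i + ∑ l ∈ univ.filter (fun l => l ≠ i), |Q i l| = a + |b| := by
  have hdiag : Q i i = a := by simp [hrow, hji.symm]
  have hoff : Q i j = b := by simp [hrow, hji]
  have hzero : ∀ l ∈ univ.filter (fun l => l ≠ i), l ≠ j → |Q i l| = 0 := by
    intro l hl hlj
    simp [hrow, (mem_filter.mp hl).2, hlj]
  rw [sum_eq_single_of_mem j (by simp [hji]) hzero, hdiag, hoff]

lemma muInf_Qblock {m : ℕ} (hm : 2 ≤ m) (ξ ψ : ℝ) : muInf (Qblock m ξ ψ) = ξ + |ψ| := by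
  have : NeZero m := ⟨by omega⟩
  have hsign (k : Fin m) : |if (k : ℕ) + 1 = m then -ψ else ψ| = |ψ| := by
    split_ifs <;> simp
  simp only [muInf, diag_add_sum_abs_offDiag_of_row_eq (finRotate_ne_self hm _)
    (Qblock_row_eq_single_add_single hm ξ ψ _), hsign, ciSup_const]

/-- The unit vector at angle `x`, seen as a row; `Pblock m` has rows `angleVec (k * (π / m))`. -/
noncomputable def angleVec (x : ℝ) : Fin 2 → ℝ :=
  ![Real.cos x, Real.sin x]

lemma angleVec_antiperiodic : Function.Antiperiodic angleVec Real.pi := fun x => by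
  simp [angleVec]

lemma angleVec_vecMul {θ : ℝ} (hθ : Real.sin θ ≠ 0) (σ ω x : ℝ) :
    angleVec x ᵥ* !![σ, ω; -ω, σ] =
      (σ - ω * (Real.cos θ / Real.sin θ)) • angleVec x +
        (ω / Real.sin θ) • angleVec (x + θ) := by
  have hcos : Real.cos x * σ + Real.sin x * -ω =
      (σ - ω * (Real.cos θ / Real.sin θ)) * Real.cos x +
        ω / Real.sin θ * Real.cos (x + θ) := by
    rw [Real.cos_add]
    field_simp
    ring
  have hsin : Real.cos x * ω + Real.sin x * σ =
      (σ - ω * (Real.cos θ / Real.sin θ)) * Real.sin x +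
        ω / Real.sin θ * Real.sin (x + θ) := by
    rw [Real.sin_add]
    field_simp
    ring
  ext j
  fin_cases j
  · simpa [angleVec, Matrix.vecMul, dotProduct] using hcos
  · simpa [angleVec, Matrix.vecMul, dotProduct] using hsin

lemma Pblock_eq_of_rows_angleVec (m : ℕ) :
    Pblock m = Matrix.of fun k : Fin m => angleVec (k * (Real.pi / m)) := by
  ext k j
  fin_cases j <;> rfl

lemma sin_pi_div_natCast_pos {m : ℕ} (hm : 2 ≤ m) : 0 < Real.sin (Real.pi / m) := by
  have hm1 : (1 : ℝ) < m := by exact_mod_cast hm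
  exact Real.sin_pos_of_pos_of_lt_pi (div_pos Real.pi_pos (by linarith))
    (div_lt_self Real.pi_pos hm1)

lemma Pblock_mul_eq_Qblock_mul {m : ℕ} (hm : 2 ≤ m) (σ ω : ℝ) :
    Pblock m * !![σ, ω; -ω, σ] =
      Qblock m (σ - ω * (Real.cos (Real.pi / m) / Real.sin (Real.pi / m)))
        (ω / Real.sin (Real.pi / m)) * Pblock m := by
  have hturn : (m : ℝ) * (Real.pi / m) = Real.pi := mul_div_cancel₀ _ (by positivity)
  have hanti : angleVec (m * (Real.pi / m)) = -angleVec ((0 : ℕ) * (Real.pi / m)) := by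
    rw [hturn, angleVec_antiperiodic.eq, Nat.cast_zero, zero_mul]
  funext k
  rw [Pblock_eq_of_rows_angleVec,
    Qblock_mul_apply_of_eq_neg hm _ _ (g := fun n => angleVec (n * (Real.pi / m))) hanti,
    Nat.cast_add_one, add_one_mul, Matrix.mul_apply_eq_vecMul]
  exact angleVec_vecMul (sin_pi_div_natCast_pos hm).ne' σ ω _

lemma sub_mul_div_add_div_neg_iff {K : Type*} [Field K] [LinearOrder K] [IsStrictOrderedRing K]
    {ω : K} (hω : 0 < ω) (σ c s : K) :
    σ - ω * (c / s) + ω / s < 0 ↔ σ / ω < (c - 1) / s := by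
  have hsplit : (c - 1) / s * ω = ω * (c / s) - ω / s := by ring
  rw [div_lt_iff₀ hω, hsplit]
  constructor <;> intro h <;> linarith

/-- continuous-time block construction: (i) `P_m Λ = Q_m P_m`;
(ii) `μ_∞(Q_m) = ξ + |ψ|`; (iii) if `ω > 0` and `σ/ω < (cos θ − 1)/sin θ` then
`μ_∞(Q_m) < 0`. -/
theorem ct_block_construction (m : ℕ) (hm : 2 ≤ m) (σ ω θ ξ ψ : ℝ)
    (hθ : θ = Real.pi / m)
    (hξ : ξ = σ - ω * (Real.cos θ / Real.sin θ))
    (hψ : ψ = ω / Real.sin θ) :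
    Pblock m * !![σ, ω; -ω, σ] = Qblock m ξ ψ * Pblock m ∧
    muInf (Qblock m ξ ψ) = ξ + |ψ| ∧
    (0 < ω → σ / ω < (Real.cos θ - 1) / Real.sin θ → muInf (Qblock m ξ ψ) < 0) := by
  subst hθ hξ hψ
  refine ⟨Pblock_mul_eq_Qblock_mul hm σ ω, muInf_Qblock hm _ _, fun hω hratio => ?_⟩
  rw [muInf_Qblock hm, abs_of_pos (div_pos hω (sin_pi_div_natCast_pos hm))]
  exact (sub_mul_div_add_div_neg_iff hω _ _ _).mpr hratio
end
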